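/- Let H be a complex Hilbert space, (a_q)_{q∈ℤ³} a CAR family of bounded operators on H, K = (K(ℓ)) a family of real symmetric matrices on the lenses with K(−ℓ)_{−r,−s} = K(ℓ)_{r,s}, and S the associated quasi-bosonic Bogoliubov generator. Let A = (A(ℓ)) be a family of real symmetric matrices on the lenses with A(−ℓ)_{−r,−s} = A(ℓ)_{r,s}. Then: (i) [S, Q₁(A)] = Q₂({A,K}) + E_{Q₁}(A), and (ii) [S, Q₂(A)] = Q₁({A,K}) + ( Σ_{ℓ∈ℤ³∖{0}} Σ_{r∈L_ℓ} {A(ℓ),K(ℓ)}_{r,r} )·Id + E_{Q₂}(A), where {A,K} is the family ℓ ↦ A(ℓ)K(ℓ)+K(ℓ)A(ℓ), E_{Q₁}(A) := 2 Σ_ℓ Σ_{r,s∈L_ℓ} A(ℓ)_{r,s} ( 𝓔_r(ℓ) b_s(ℓ) + b_s*(ℓ) 𝓔_r(ℓ)* ), and E_{Q₂}(A) := Σ_ℓ Σ_{r,s∈L_ℓ} ( A(ℓ)_{r,s}( {𝓔_r(ℓ)*, b_{−s}(−ℓ)} + {b*_{−s}(−ℓ), 𝓔_r(ℓ)} ) +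 {A(ℓ),K(ℓ)}_{r,s}·ε_{r,s}(ℓ,ℓ) ), with 𝓔_p(k) := (1/2) Σ_{ℓ'} Σ_{r',s'∈L_{ℓ'}} K(ℓ')_{r',s'} { ε_{r',p}(ℓ',k), b_{−s'}(−ℓ') } and ε_{p,q}(k,ℓ) := −( δ_{p,q}·a*_{q−ℓ} a_{p−k} + δ_{p−k,q−ℓ}·a_q* a_p ). -/

import Mathlib

/-!
The identities hold because `S` acts on the pair operators as a Bogoliubov generator up to the
bosonization error. The CAR give the quasi-bosonic relations `[b_p(k), b_q(ℓ)] = 0` and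
`[b_p(k), b_q*(ℓ)] = δ_{p,q} δ_{k,ℓ} + ε_{p,q}(k,ℓ)` for `p ∈ L_k`, `q ∈ L_ℓ`
(`bop_mul_bop_comm`, `bop_mul_bopS`). Combined with the invariance of `S` under the reflection
`(ℓ, r, s) ↦ (-ℓ, -s, -r)`, they yield
`[S, b_p*(k)] = Σ_s K(k)_{p,s} b_{-s}(-k) + 𝓔_p(k)` (`comm_bopS`), and `[S, b_p(k)]` is the
adjoint of the right-hand side because `S* = -S` (`comm_bop`). The Leibniz rule then reduces
both claims to rearrangements of finite sums, using once more the reflection symmetry and, in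
the second claim, the relation `b_r b_s* = b_s* b_r + δ_{r,s} + ε_{r,s}` to normal order; this
last step produces the trace term.

All sums are finite: they are taken over a reflection-symmetric finite set `F` of momenta which
contains every `ℓ` with `K(ℓ) ≠ 0` or `A(ℓ) ≠ 0` together with the corresponding lenses.
-/

open scoped BigOperators
open MeasureTheory

noncomputable section

attribute [local instance] Classical.propDecidable

/-- The momentum lattice `ℤ³`. -/
abbrev Z3 : Type := Fin 3 → ℤ

/-- Squared Euclidean norm `|p|²` of an integer vector, as a real number. -/
def nsq (p : Z3) : ℝ := ∑ i, ((p i : ℝ)) ^ 2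

/-- The Fermi ball `B_F = {k ∈ ℤ³ : |k| ≤ k_F}`. -/
def BF (kF : ℝ) : Set Z3 := {k | nsq k ≤ kF ^ 2}

/-- The lens `L_ℓ = B_F^c ∩ (B_F + ℓ)`. -/
def lens (kF : ℝ) (ℓ : Z3) : Set Z3 := {p | p ∉ BF kF ∧ p - ℓ ∈ BF kF}

/-- The excitation energy `λ_{ℓ,p} = (|p|² − |p−ℓ|²)/2`. -/
def lam (ℓ p : Z3) : ℝ := (nsq p - nsq (p - ℓ)) / 2

/-- The energy gap `e(q) = | |q|² − min_{p ∈ B_F^c} |p|² + 1/2 |`. -/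
def efun (kF : ℝ) (q : Z3) : ℝ := |nsq q - sInf (nsq '' (BF kF)ᶜ) + 1 / 2|

variable {H : Type*} [NormedAddCommGroup H] [InnerProductSpace ℂ H] [CompleteSpace H]

local postfix:max "†" => ContinuousLinearMap.adjoint

local notation "⟪" x ", " y "⟫" => @inner ℂ _ _ x y

/-- The canonical anticommutation relations for a family of bounded operators. -/
def CAR (a : Z3 → H →L[ℂ] H) : Prop :=
  (∀ q q' : Z3, a q * a q' + a q' * a q = 0) ∧
  (∀ q q' : Z3, a q * (a q')† + (a q')† * a q = if q = q' then 1 else 0)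

/-- The pair annihilation operator `b_p(k) = a_{p−k} a_p`. -/
def bop (a : Z3 → H →L[ℂ] H) (k p : Z3) : H →L[ℂ] H := a (p - k) * a p

/-- The pair creation operator `b_p^*(k) = a_p^* a_{p−k}^*`. -/
def bopS (a : Z3 → H →L[ℂ] H) (k p : Z3) : H →L[ℂ] H := (a p)† * (a (p - k))†

/-- The quasi-bosonic commutation error `ε_{p,q}(k,ℓ)`. -/
def epsOp (a : Z3 → H →L[ℂ] H) (k ℓ p q : Z3) : H →L[ℂ] H :=
  -((if p = q then (1 : ℂ) else 0) • ((a (q - ℓ))† * a (p - k))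
    + (if p - k = q - ℓ then (1 : ℂ) else 0) • ((a q)† * a p))

/-- The quasi-bosonic Bogoliubov generator
`S = (1/2) Σ_ℓ Σ_{r,s∈L_ℓ} K(ℓ)_{r,s} (b_r(ℓ) b_{−s}(−ℓ) − b_{−s}^*(−ℓ) b_r^*(ℓ))`. -/
def Sgen (kF : ℝ) (a : Z3 → H →L[ℂ] H) (K : Z3 → Z3 → Z3 → ℝ) : H →L[ℂ] H :=
  (1 / 2 : ℂ) • ∑' ℓ : Z3, ∑' r : Z3, ∑' s : Z3,
    (if ℓ ≠ 0 ∧ r ∈ lens kF ℓ ∧ s ∈ lens kF ℓ then ((K ℓ r s : ℝ) : ℂ) else 0) •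
      (bop a ℓ r * bop a (-ℓ) (-s) - bopS a (-ℓ) (-s) * bopS a ℓ r)

/-- The bosonization error operator
`𝓔_p(k) = (1/2) Σ_ℓ Σ_{r,s∈L_ℓ} K(ℓ)_{r,s} {ε_{r,p}(ℓ,k), b_{−s}(−ℓ)}`. -/
def calE (kF : ℝ) (a : Z3 → H →L[ℂ] H) (K : Z3 → Z3 → Z3 → ℝ) (k p : Z3) : H →L[ℂ] H :=
  (1 / 2 : ℂ) • ∑' ℓ : Z3, ∑' r : Z3, ∑' s : Z3,
    (if ℓ ≠ 0 ∧ r ∈ lens kF ℓ ∧ s ∈ lens kF ℓ then ((K ℓ r s : ℝ) : ℂ) else 0) •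
      (epsOp a ℓ k r p * bop a (-ℓ) (-s) + bop a (-ℓ) (-s) * epsOp a ℓ k r p)

/-- The quadratic quasi-bosonic operator `Q₁(A) = 2 Σ_ℓ Σ_{r,s∈L_ℓ} A(ℓ)_{r,s} b_r^*(ℓ) b_s(ℓ)`. -/
def Q1 (kF : ℝ) (a : Z3 → H →L[ℂ] H) (A : Z3 → Z3 → Z3 → ℝ) : H →L[ℂ] H :=
  (2 : ℂ) • ∑' ℓ : Z3, ∑' r : Z3, ∑' s : Z3,
    (if ℓ ≠ 0 ∧ r ∈ lens kF ℓ ∧ s ∈ lens kF ℓ then ((A ℓ r s : ℝ) : ℂ) else 0) •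
      (bopS a ℓ r * bop a ℓ s)

/-- The quadratic quasi-bosonic operator
`Q₂(A) = Σ_ℓ Σ_{r,s∈L_ℓ} A(ℓ)_{r,s} (b_r(ℓ) b_{−s}(−ℓ) + b_{−s}^*(−ℓ) b_r^*(ℓ))`. -/
def Q2 (kF : ℝ) (a : Z3 → H →L[ℂ] H) (A : Z3 → Z3 → Z3 → ℝ) : H →L[ℂ] H :=
  ∑' ℓ : Z3, ∑' r : Z3, ∑' s : Z3,
    (if ℓ ≠ 0 ∧ r ∈ lens kF ℓ ∧ s ∈ lens kF ℓ then ((A ℓ r s : ℝ) : ℂ) else 0) •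
      (bop a ℓ r * bop a (-ℓ) (-s) + bopS a (-ℓ) (-s) * bopS a ℓ r)

/-- Product of two real matrices realized as functions on `ℤ³ × ℤ³`. -/
def matMulR (A B : Z3 → Z3 → ℝ) : Z3 → Z3 → ℝ := fun r s => ∑' t : Z3, A r t * B t s

/-- The anticommutator family `{A,K}(ℓ) = A(ℓ)K(ℓ) + K(ℓ)A(ℓ)`. -/
def anticommFam (A K : Z3 → Z3 → Z3 → ℝ) : Z3 → Z3 → Z3 → ℝ :=
  fun ℓ r s => matMulR (A ℓ) (K ℓ) r s + matMulR (K ℓ) (A ℓ) r s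

/-- The bosonization error operator `E_{Q₁}(A)`. -/
def EQ1 (kF : ℝ) (a : Z3 → H →L[ℂ] H) (K A : Z3 → Z3 → Z3 → ℝ) : H →L[ℂ] H :=
  (2 : ℂ) • ∑' ℓ : Z3, ∑' r : Z3, ∑' s : Z3,
    (if ℓ ≠ 0 ∧ r ∈ lens kF ℓ ∧ s ∈ lens kF ℓ then ((A ℓ r s : ℝ) : ℂ) else 0) •
      (calE kF a K ℓ r * bop a ℓ s + bopS a ℓ s * (calE kF a K ℓ r)†)

/-- The bosonization error operator `E_{Q₂}(A)`. -/
def EQ2 (kF : ℝ) (a : Z3 → H →L[ℂ] H) (K A : Z3 → Z3 → Z3 → ℝ) : H →L[ℂ] H :=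
  ∑' ℓ : Z3, ∑' r : Z3, ∑' s : Z3,
    (if ℓ ≠ 0 ∧ r ∈ lens kF ℓ ∧ s ∈ lens kF ℓ then (1 : ℂ) else 0) •
      (((A ℓ r s : ℝ) : ℂ) •
          (((calE kF a K ℓ r)† * bop a (-ℓ) (-s) + bop a (-ℓ) (-s) * (calE kF a K ℓ r)†)
            + (bopS a (-ℓ) (-s) * calE kF a K ℓ r + calE kF a K ℓ r * bopS a (-ℓ) (-s)))
        + ((anticommFam A K ℓ r s : ℝ) : ℂ) • epsOp a ℓ ℓ r s)

/-! ### Finite triple sums -/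

/-- The triple sum of `f` over `F × F × F`. -/
def sum3 {M : Type*} [AddCommMonoid M] (F : Finset Z3) (f : Z3 → Z3 → Z3 → M) : M :=
  ∑ ℓ ∈ F, ∑ r ∈ F, ∑ s ∈ F, f ℓ r s

section sums

variable {M : Type*}

lemma sum3_congr [AddCommMonoid M] {F : Finset Z3} {f g : Z3 → Z3 → Z3 → M}
    (h : ∀ ℓ ∈ F, ∀ r ∈ F, ∀ s ∈ F, f ℓ r s = g ℓ r s) : sum3 F f = sum3 F g :=
  Finset.sum_congr rfl fun ℓ hℓ => Finset.sum_congr rfl fun r hr =>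
    Finset.sum_congr rfl fun s hs => h ℓ hℓ r hr s hs

lemma sum3_add [AddCommMonoid M] (F : Finset Z3) (f g : Z3 → Z3 → Z3 → M) :
    sum3 F (fun ℓ r s => f ℓ r s + g ℓ r s) = sum3 F f + sum3 F g := by
  simp only [sum3, Finset.sum_add_distrib]

lemma sum3_smul [AddCommMonoid M] [Module ℂ M] (F : Finset Z3) (c : ℂ)
    (f : Z3 → Z3 → Z3 → M) : sum3 F (fun ℓ r s => c • f ℓ r s) = c • sum3 F f := by
  simp only [sum3, Finset.smul_sum]

lemma sum3_swap [AddCommMonoid M] (F : Finset Z3) (f : Z3 → Z3 → Z3 → M) :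
    sum3 F f = sum3 F fun ℓ r s => f ℓ s r :=
  Finset.sum_congr rfl fun _ _ => Finset.sum_comm

lemma sum_neg_index [AddCommMonoid M] {F : Finset Z3} (hF : ∀ x ∈ F, -x ∈ F) (f : Z3 → M) :
    ∑ x ∈ F, f x = ∑ x ∈ F, f (-x) :=
  Finset.sum_nbij' (fun x => -x) (fun x => -x) hF hF (by simp) (by simp) (by simp)

/-- Invariance of a triple sum under the reflection `(ℓ, r, s) ↦ (-ℓ, -s, -r)`. -/
lemma sum3_refl [AddCommMonoid M] {F : Finset Z3} (hF : ∀ x ∈ F, -x ∈ F)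
    (f : Z3 → Z3 → Z3 → M) : sum3 F f = sum3 F fun ℓ r s => f (-ℓ) (-s) (-r) := by
  rw [sum3_swap]
  unfold sum3
  rw [sum_neg_index hF]
  refine Finset.sum_congr rfl fun ℓ _ => ?_
  rw [sum_neg_index hF]
  exact Finset.sum_congr rfl fun r _ => sum_neg_index hF _

lemma sum3_mul_comm [Ring M] (F : Finset Z3) (x : M) (f : Z3 → Z3 → Z3 → M) :
    x * sum3 F f - sum3 F f * x = sum3 F fun ℓ r s => x * f ℓ r s - f ℓ r s * x := by
  simp only [sum3, Finset.mul_sum, Finset.sum_mul, Finset.sum_sub_distrib]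

lemma sum3_comm_mul [Ring M] (F : Finset Z3) (x : M) (f : Z3 → Z3 → Z3 → M) :
    sum3 F f * x - x * sum3 F f = sum3 F fun ℓ r s => f ℓ r s * x - x * f ℓ r s := by
  simp only [sum3, Finset.mul_sum, Finset.sum_mul, Finset.sum_sub_distrib]

lemma tsum_eq_sum3 [AddCommMonoid M] [TopologicalSpace M] {F : Finset Z3}
    {f : Z3 → Z3 → Z3 → M}
    (h : ∀ ℓ r s, (ℓ ∉ F ∨ r ∉ F ∨ s ∉ F) → f ℓ r s = 0) :
    ∑' ℓ, ∑' r, ∑' s, f ℓ r s = sum3 F f := by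
  have h1 : ∀ ℓ r, ∑' s, f ℓ r s = ∑ s ∈ F, f ℓ r s := fun ℓ r =>
    tsum_eq_sum fun s hs => h ℓ r s (by tauto)
  have h2 : ∀ ℓ, ∑' r, ∑ s ∈ F, f ℓ r s = ∑ r ∈ F, ∑ s ∈ F, f ℓ r s := fun ℓ =>
    tsum_eq_sum fun r hr => Finset.sum_eq_zero fun s _ => h ℓ r s (by tauto)
  simp only [h1, h2]
  exact tsum_eq_sum fun ℓ hl => Finset.sum_eq_zero fun r _ => Finset.sum_eq_zero fun s _ =>
    h ℓ r s (by tauto)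

end sums

/-! ### Lenses -/

lemma BF_finite (kF : ℝ) : (BF kF).Finite := by
  obtain ⟨N, hN⟩ := exists_nat_ge |kF|
  refine (Set.finite_Icc (fun _ : Fin 3 => -(N : ℤ)) (fun _ => (N : ℤ))).subset fun k hk => ?_
  have hk' : nsq k ≤ kF ^ 2 := hk
  have key : ∀ i, |k i| ≤ (N : ℤ) := fun i => by
    have h1 : ((k i : ℝ)) ^ 2 ≤ nsq k :=
      Finset.single_le_sum (f := fun i => ((k i : ℝ)) ^ 2) (fun _ _ => sq_nonneg _)
        (Finset.mem_univ i)
    have h2 : |(k i : ℝ)| ≤ N := (sq_le_sq.mp (h1.trans hk')).trans hN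
    exact_mod_cast h2
  exact ⟨fun i => (abs_le.mp (key i)).1, fun i => (abs_le.mp (key i)).2⟩

lemma lens_finite (kF : ℝ) (ℓ : Z3) : (lens kF ℓ).Finite :=
  ((BF_finite kF).image fun x => x + ℓ).subset fun p hp => ⟨p - ℓ, hp.2, by simp⟩

lemma not_mem_lens_zero (kF : ℝ) (p : Z3) : p ∉ lens kF 0 := fun h =>
  h.1 (by simpa using h.2)

lemma neg_mem_BF {kF : ℝ} {p : Z3} : -p ∈ BF kF ↔ p ∈ BF kF := by
  simp [BF, nsq]

lemma neg_mem_lens {kF : ℝ} {ℓ p : Z3} : -p ∈ lens kF (-ℓ) ↔ p ∈ lens kF ℓ := by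
  have : -p - -ℓ = -(p - ℓ) := by abel
  simp only [lens, Set.mem_ofPred_eq, this, neg_mem_BF]

/-- The lens condition in the definitions is redundant for a family supported on the lenses;
the condition `ℓ ≠ 0` too, since the lens at `0` is empty. -/
lemma coeff_eq {kF : ℝ} {A : Z3 → Z3 → Z3 → ℝ}
    (hA : ∀ ℓ r s : Z3, (r ∉ lens kF ℓ ∨ s ∉ lens kF ℓ) → A ℓ r s = 0) (ℓ r s : Z3) :
    (if ℓ ≠ 0 ∧ r ∈ lens kF ℓ ∧ s ∈ lens kF ℓ then ((A ℓ r s : ℝ) : ℂ) else 0)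
      = (A ℓ r s : ℂ) := by
  split_ifs with h
  · rfl
  · have : r ∉ lens kF ℓ ∨ s ∉ lens kF ℓ := by
      by_cases h0 : ℓ = 0
      · left; rw [h0]; exact not_mem_lens_zero kF r
      · tauto
    simp [hA ℓ r s this]

/-- A reflection-symmetric finite set of momenta carrying both families. -/
lemma exists_box {kF : ℝ} {K A : Z3 → Z3 → Z3 → ℝ}
    (hKsupp : ∀ ℓ r s : Z3, (r ∉ lens kF ℓ ∨ s ∉ lens kF ℓ) → K ℓ r s = 0)
    (hKfin : {ℓ : Z3 | K ℓ ≠ 0}.Finite)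
    (hAsupp : ∀ ℓ r s : Z3, (r ∉ lens kF ℓ ∨ s ∉ lens kF ℓ) → A ℓ r s = 0)
    (hAfin : {ℓ : Z3 | A ℓ ≠ 0}.Finite) :
    ∃ F : Finset Z3, (∀ x ∈ F, -x ∈ F) ∧
      (∀ ℓ r s, (ℓ ∉ F ∨ r ∉ F ∨ s ∉ F) → K ℓ r s = 0) ∧
      (∀ ℓ r s, (ℓ ∉ F ∨ r ∉ F ∨ s ∉ F) → A ℓ r s = 0) := by
  set V : Set Z3 := {ℓ : Z3 | K ℓ ≠ 0} ∪ {ℓ : Z3 | A ℓ ≠ 0} with hV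
  have hVf : V.Finite := hKfin.union hAfin
  set U : Set Z3 := V ∪ ⋃ ℓ ∈ V, lens kF ℓ with hU
  have hUf : U.Finite := hVf.union (hVf.biUnion fun ℓ _ => lens_finite kF ℓ)
  have hW : (U ∪ -U).Finite := hUf.union hUf.neg
  have key : ∀ B : Z3 → Z3 → Z3 → ℝ, {ℓ : Z3 | B ℓ ≠ 0} ⊆ V →
      (∀ ℓ r s : Z3, (r ∉ lens kF ℓ ∨ s ∉ lens kF ℓ) → B ℓ r s = 0) →
      ∀ ℓ r s, (ℓ ∉ hW.toFinset ∨ r ∉ hW.toFinset ∨ s ∉ hW.toFinset) → B ℓ r s = 0 := by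
    intro B hB hs ℓ r s h
    by_contra hne
    have hl : ℓ ∈ V := hB fun h0 => hne (by rw [h0]; rfl)
    have hr : r ∈ lens kF ℓ := by by_contra h'; exact hne (hs _ _ _ (Or.inl h'))
    have hs : s ∈ lens kF ℓ := by by_contra h'; exact hne (hs _ _ _ (Or.inr h'))
    have hsub : ∀ x ∈ lens kF ℓ, x ∈ U := fun x hx => Or.inr (Set.mem_biUnion hl hx)
    simp only [Set.Finite.mem_toFinset] at h
    rcases h with h | h | h
    · exact h (Or.inl (Or.inl hl))
    · exact h (Or.inl (hsub r hr))
    · exact h (Or.inl (hsub s hs))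
  refine ⟨hW.toFinset, ?_, key K Set.subset_union_left hKsupp,
    key A Set.subset_union_right hAsupp⟩
  intro x hx
  simp only [Set.Finite.mem_toFinset, Set.mem_union, Set.mem_neg, neg_neg] at hx ⊢
  exact hx.symm

/-! ### Quasi-bosonic commutation relations -/

section car

variable {H : Type*} [NormedAddCommGroup H] [InnerProductSpace ℂ H] [CompleteSpace H]

lemma star_bop (a : Z3 → H →L[ℂ] H) (k p : Z3) : star (bop a k p) = bopS a k p := by
  simp only [bop, bopS, star_mul, ContinuousLinearMap.star_eq_adjoint]

lemma star_bopS (a : Z3 → H →L[ℂ] H) (k p : Z3) : star (bopS a k p) = bop a k p := by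
  rw [← star_bop, star_star]

lemma bop_mul_bop_comm {a : Z3 → H →L[ℂ] H} (hCAR : CAR a) (k p l q : Z3) :
    bop a k p * bop a l q = bop a l q * bop a k p := by
  have h : ∀ x y, a x * a y = -(a y * a x) := fun x y => eq_neg_of_add_eq_zero_left (hCAR.1 x y)
  have h' : ∀ (x y : Z3) (z : H →L[ℂ] H), a x * (a y * z) = -(a y * (a x * z)) :=
    fun x y z => by rw [← mul_assoc, h, neg_mul, mul_assoc]
  simp only [bop, mul_assoc]
  rw [h' p (q - l), h p q, mul_neg, mul_neg, mul_neg, neg_neg, h' (p - k) (q - l),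
    h' (p - k) q, mul_neg, neg_neg]

lemma bopS_mul_bopS_comm {a : Z3 → H →L[ℂ] H} (hCAR : CAR a) (k p l q : Z3) :
    bopS a k p * bopS a l q = bopS a l q * bopS a k p := by
  rw [← star_bop, ← star_bop, ← star_mul, ← star_mul, bop_mul_bop_comm hCAR]

/-- The quasi-bosonic relation `[b_p(k), b_q*(ℓ)] = δ_{p,q} δ_{k,ℓ} + ε_{p,q}(k,ℓ)`. The
contractions of `p` with `q - ℓ` and of `p - k` with `q` vanish because `p, q` lie outside the
Fermi ball and `p - k, q - ℓ` inside. -/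
lemma bop_mul_bopS {a : Z3 → H →L[ℂ] H} (hCAR : CAR a) {kF : ℝ} {k p l q : Z3}
    (hp : p ∈ lens kF k) (hq : q ∈ lens kF l) :
    bop a k p * bopS a l q
      = bopS a l q * bop a k p + (if p = q ∧ k = l then (1 : ℂ) else 0) • 1
        + epsOp a k l p q := by
  have hxz : a (p - k) * (a q)† = -((a q)† * a (p - k)) := by
    refine eq_neg_of_add_eq_zero_left ?_
    rw [hCAR.2, if_neg]
    rintro rfl
    exact hq.1 hp.2
  have hyw : a p * (a (q - l))† = -((a (q - l))† * a p) := by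
    refine eq_neg_of_add_eq_zero_left ?_
    rw [hCAR.2, if_neg]
    rintro rfl
    exact hp.1 hq.2
  have hyz : a p * (a q)† = (if p = q then (1 : ℂ) else 0) • 1 - (a q)† * a p := by
    rw [eq_sub_iff_add_eq, hCAR.2]; split_ifs <;> simp
  have hxw : a (p - k) * (a (q - l))†
      = (if p - k = q - l then (1 : ℂ) else 0) • 1 - (a (q - l))† * a (p - k) := by
    rw [eq_sub_iff_add_eq, hCAR.2]; split_ifs <;> simp
  have hd : (if p = q ∧ k = l then (1 : ℂ) else 0)
      = (if p = q then (1 : ℂ) else 0) * (if p - k = q - l then (1 : ℂ) else 0) := by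
    by_cases h : p = q
    · subst h; simp
    · simp [h]
  rw [hd]
  unfold bop bopS epsOp
  generalize (if p = q then (1 : ℂ) else 0) = d1 at *
  generalize (if p - k = q - l then (1 : ℂ) else 0) = d2 at *
  generalize a (p - k) = x at *
  generalize a p = y at *
  generalize (a q)† = z at *
  generalize (a (q - l))† = w at *
  calc x * y * (z * w) = x * (y * z) * w := by noncomm_ring
    _ = d1 • (x * w) - (x * z) * (y * w) := by
      rw [hyz, mul_sub, sub_mul]; simp [mul_assoc]
    _ = d1 • (x * w) - z * (x * w) * y := by rw [hxz, hyw]; noncomm_ring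
    _ = z * w * (x * y) + (d1 * d2) • 1 + -(d1 • (w * x) + d2 • (z * y)) := by
      rw [hxw, mul_sub, sub_mul, smul_sub, smul_smul]
      simp only [mul_smul_comm, smul_mul_assoc, mul_one, mul_assoc]
      abel

end car

/-! ### The commutators of `S` with the pair operators -/

section comm

variable {H : Type*} [NormedAddCommGroup H] [InnerProductSpace ℂ H] [CompleteSpace H]
  {kF : ℝ} {a : Z3 → H →L[ℂ] H} {K : Z3 → Z3 → Z3 → ℝ} {F : Finset Z3}

lemma Sgen_eq (hKsupp : ∀ ℓ r s : Z3, (r ∉ lens kF ℓ ∨ s ∉ lens kF ℓ) → K ℓ r s = 0)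
    (hKF : ∀ ℓ r s, (ℓ ∉ F ∨ r ∉ F ∨ s ∉ F) → K ℓ r s = 0) :
    Sgen kF a K = (1 / 2 : ℂ) • sum3 F fun ℓ r s => (K ℓ r s : ℂ) •
      (bop a ℓ r * bop a (-ℓ) (-s) - bopS a (-ℓ) (-s) * bopS a ℓ r) := by
  unfold Sgen
  simp only [coeff_eq hKsupp]
  rw [tsum_eq_sum3]
  intro ℓ r s h
  simp [hKF ℓ r s h]

lemma calE_eq (hKsupp : ∀ ℓ r s : Z3, (r ∉ lens kF ℓ ∨ s ∉ lens kF ℓ) → K ℓ r s = 0)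
    (hKF : ∀ ℓ r s, (ℓ ∉ F ∨ r ∉ F ∨ s ∉ F) → K ℓ r s = 0) (k p : Z3) :
    calE kF a K k p = (1 / 2 : ℂ) • sum3 F fun ℓ r s => (K ℓ r s : ℂ) •
      (epsOp a ℓ k r p * bop a (-ℓ) (-s) + bop a (-ℓ) (-s) * epsOp a ℓ k r p) := by
  unfold calE
  simp only [coeff_eq hKsupp]
  rw [tsum_eq_sum3]
  intro ℓ r s h
  simp [hKF ℓ r s h]

lemma star_Sgen (hKsupp : ∀ ℓ r s : Z3, (r ∉ lens kF ℓ ∨ s ∉ lens kF ℓ) → K ℓ r s = 0)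
    (hKF : ∀ ℓ r s, (ℓ ∉ F ∨ r ∉ F ∨ s ∉ F) → K ℓ r s = 0) :
    star (Sgen kF a K) = -Sgen kF a K := by
  rw [Sgen_eq hKsupp hKF]
  simp only [sum3, star_smul, star_sum, star_sub, star_mul, star_bop, star_bopS]
  rw [← smul_neg]
  simp only [← Finset.sum_neg_distrib, ← smul_neg, neg_sub]
  simp

/-- `[S, b_p*(k)] = Σ_s K(k)_{p,s} b_{-s}(-k) + 𝓔_p(k)`. -/
lemma comm_bopS (hCAR : CAR a)
    (hKsymm : ∀ ℓ r s : Z3, K ℓ r s = K ℓ s r)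
    (hKsupp : ∀ ℓ r s : Z3, (r ∉ lens kF ℓ ∨ s ∉ lens kF ℓ) → K ℓ r s = 0)
    (hKrefl : ∀ ℓ r s : Z3, K (-ℓ) (-r) (-s) = K ℓ r s)
    (hF : ∀ x ∈ F, -x ∈ F)
    (hKF : ∀ ℓ r s, (ℓ ∉ F ∨ r ∉ F ∨ s ∉ F) → K ℓ r s = 0)
    {k p : Z3} (hp : p ∈ lens kF k) :
    Sgen kF a K * bopS a k p - bopS a k p * Sgen kF a K
      = (∑ s ∈ F, (K k p s : ℂ) • bop a (-k) (-s)) + calE kF a K k p := by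
  -- Only the annihilation part of `S` contributes; each factor gives one contraction.
  have h1 : Sgen kF a K * bopS a k p - bopS a k p * Sgen kF a K
      = (1 / 2 : ℂ) • (sum3 F (fun ℓ r s => (K ℓ r s : ℂ) •
          (bop a ℓ r * ((if -s = p ∧ -ℓ = k then (1 : ℂ) else 0) • 1
            + epsOp a (-ℓ) k (-s) p)))
        + sum3 F (fun ℓ r s => (K ℓ r s : ℂ) •
          (((if r = p ∧ ℓ = k then (1 : ℂ) else 0) • 1 + epsOp a ℓ k r p)
            * bop a (-ℓ) (-s)))) := by
    rw [Sgen_eq hKsupp hKF, smul_mul_assoc, mul_smul_comm, ← smul_sub, sum3_comm_mul,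
      ← sum3_add]
    congr 1
    refine sum3_congr fun ℓ _ r _ s _ => ?_
    by_cases h : r ∉ lens kF ℓ ∨ s ∉ lens kF ℓ
    · simp [hKsupp ℓ r s h]
    rw [not_or, not_not, not_not] at h
    rw [smul_mul_assoc, mul_smul_comm, ← smul_sub, ← smul_add]
    congr 1
    have e1 := bop_mul_bopS hCAR h.1 hp
    have e2 := bop_mul_bopS hCAR (neg_mem_lens.mpr h.2) hp
    have e3 := bopS_mul_bopS_comm hCAR ℓ r k p
    have e4 := bopS_mul_bopS_comm hCAR (-ℓ) (-s) k p
    have e1' : ((if r = p ∧ ℓ = k then (1 : ℂ) else 0) • 1 + epsOp a ℓ k r p)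
        = bop a ℓ r * bopS a k p - bopS a k p * bop a ℓ r := by rw [e1]; abel
    have e2' : ((if -s = p ∧ -ℓ = k then (1 : ℂ) else 0) • 1 + epsOp a (-ℓ) k (-s) p)
        = bop a (-ℓ) (-s) * bopS a k p - bopS a k p * bop a (-ℓ) (-s) := by rw [e2]; abel
    rw [e1', e2', sub_mul, mul_assoc (bopS a (-ℓ) (-s)), e3, ← mul_assoc (bopS a (-ℓ) (-s)), e4]
    noncomm_ring
  have h2 : sum3 F (fun ℓ r s => (K ℓ r s : ℂ) •
        (((if r = p ∧ ℓ = k then (1 : ℂ) else 0) • 1) * bop a (-ℓ) (-s)))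
      = ∑ s ∈ F, (K k p s : ℂ) • bop a (-k) (-s) := by
    unfold sum3
    by_cases hk : k ∈ F ∧ p ∈ F
    · rw [Finset.sum_eq_single_of_mem k hk.1, Finset.sum_eq_single_of_mem p hk.2]
      · simp
      · intro r _ hr; simp [hr]
      · intro l _ hl; simp [hl]
    · rw [Finset.sum_eq_zero, Finset.sum_eq_zero]
      · intro s _
        rw [hKF k p s (by tauto)]; simp
      · intro l hl
        refine Finset.sum_eq_zero fun r hr => Finset.sum_eq_zero fun s _ => ?_
        have hne : ¬(r = p ∧ l = k) := by rintro ⟨rfl, rfl⟩; exact hk ⟨hl, hr⟩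
        simp only [if_neg hne, zero_smul, zero_mul, smul_zero]
  have h2' : sum3 F (fun ℓ r s => (K ℓ r s : ℂ) •
        (bop a (-ℓ) (-s) * ((if r = p ∧ ℓ = k then (1 : ℂ) else 0) • 1)))
      = ∑ s ∈ F, (K k p s : ℂ) • bop a (-k) (-s) := by
    rw [← h2]; simp
  rw [h1, sum3_refl hF (fun ℓ r s => (K ℓ r s : ℂ) •
          (bop a ℓ r * ((if -s = p ∧ -ℓ = k then (1 : ℂ) else 0) • 1
            + epsOp a (-ℓ) k (-s) p))), calE_eq hKsupp hKF]
  simp only [neg_neg, hKrefl, mul_add, add_mul, smul_add, sum3_add]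
  have hs : ∀ ℓ r s, (K ℓ s r : ℂ) = (K ℓ r s : ℂ) := fun ℓ r s => by rw [hKsymm]
  simp only [hs, h2, h2']
  module

/-- `[S, b_p(k)] = Σ_s K(k)_{p,s} b*_{-s}(-k) + 𝓔_p(k)*`: the adjoint of `comm_bopS`. -/
lemma comm_bop (hCAR : CAR a)
    (hKsymm : ∀ ℓ r s : Z3, K ℓ r s = K ℓ s r)
    (hKsupp : ∀ ℓ r s : Z3, (r ∉ lens kF ℓ ∨ s ∉ lens kF ℓ) → K ℓ r s = 0)
    (hKrefl : ∀ ℓ r s : Z3, K (-ℓ) (-r) (-s) = K ℓ r s)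
    (hF : ∀ x ∈ F, -x ∈ F)
    (hKF : ∀ ℓ r s, (ℓ ∉ F ∨ r ∉ F ∨ s ∉ F) → K ℓ r s = 0)
    {k p : Z3} (hp : p ∈ lens kF k) :
    Sgen kF a K * bop a k p - bop a k p * Sgen kF a K
      = (∑ s ∈ F, (K k p s : ℂ) • bopS a (-k) (-s)) + (calE kF a K k p)† := by
  have h := congrArg star (comm_bopS hCAR hKsymm hKsupp hKrefl hF hKF hp)
  simp only [star_sub, star_mul, star_Sgen hKsupp hKF, star_add, star_sum, star_smul,
    star_bop, star_bopS] at h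
  rw [← ContinuousLinearMap.star_eq_adjoint]
  have hc : ∀ x : ℝ, star (x : ℂ) = (x : ℂ) := fun x => Complex.conj_ofReal x
  simp only [hc] at h
  rw [← h]
  noncomm_ring

end comm

/-! ### The anticommutator family -/

section mat

variable {kF : ℝ} {K A : Z3 → Z3 → Z3 → ℝ} {F : Finset Z3}

/-- The complex matrix product `A(ℓ) K(ℓ)`, as a sum over the finite index set `F`. -/
def prodC (F : Finset Z3) (A K : Z3 → Z3 → Z3 → ℝ) (ℓ r s : Z3) : ℂ :=
  ∑ t ∈ F, (A ℓ r t : ℂ) * (K ℓ t s : ℂ)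

lemma prodC_refl (hKrefl : ∀ ℓ r s : Z3, K (-ℓ) (-r) (-s) = K ℓ r s)
    (hArefl : ∀ ℓ r s : Z3, A (-ℓ) (-r) (-s) = A ℓ r s) (hF : ∀ x ∈ F, -x ∈ F)
    (ℓ r s : Z3) : prodC F A K (-ℓ) (-r) (-s) = prodC F A K ℓ r s := by
  unfold prodC
  rw [sum_neg_index hF]
  simp only [hKrefl, hArefl]

lemma anticommFam_eq (hKsymm : ∀ ℓ r s : Z3, K ℓ r s = K ℓ s r)
    (hAsymm : ∀ ℓ r s : Z3, A ℓ r s = A ℓ s r)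
    (hKF : ∀ ℓ r s, (ℓ ∉ F ∨ r ∉ F ∨ s ∉ F) → K ℓ r s = 0)
    (ℓ r s : Z3) :
    (anticommFam A K ℓ r s : ℂ) = prodC F A K ℓ r s + prodC F A K ℓ s r := by
  unfold anticommFam matMulR prodC
  rw [tsum_eq_sum (s := F), tsum_eq_sum (s := F)]
  · push_cast
    congr 1
    refine Finset.sum_congr rfl fun t _ => ?_
    rw [mul_comm, hKsymm ℓ r t, hAsymm ℓ t s]
  · intro t ht; rw [hKF ℓ r t (by tauto), zero_mul]
  · intro t ht; rw [hKF ℓ t s (by tauto), mul_zero]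

lemma anticommFam_supp
    (hKsupp : ∀ ℓ r s : Z3, (r ∉ lens kF ℓ ∨ s ∉ lens kF ℓ) → K ℓ r s = 0)
    (hAsupp : ∀ ℓ r s : Z3, (r ∉ lens kF ℓ ∨ s ∉ lens kF ℓ) → A ℓ r s = 0)
    (ℓ r s : Z3) (h : r ∉ lens kF ℓ ∨ s ∉ lens kF ℓ) : anticommFam A K ℓ r s = 0 := by
  have h1 : ∀ t, A ℓ r t * K ℓ t s = 0 := fun t => by
    rcases h with h | h
    · rw [hAsupp ℓ r t (Or.inl h), zero_mul]
    · rw [hKsupp ℓ t s (Or.inr h), mul_zero]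
  have h2 : ∀ t, K ℓ r t * A ℓ t s = 0 := fun t => by
    rcases h with h | h
    · rw [hKsupp ℓ r t (Or.inl h), zero_mul]
    · rw [hAsupp ℓ t s (Or.inr h), mul_zero]
  simp [anticommFam, matMulR, h1, h2]

lemma anticommFam_supp'
    (hKF : ∀ ℓ r s, (ℓ ∉ F ∨ r ∉ F ∨ s ∉ F) → K ℓ r s = 0)
    (hAF : ∀ ℓ r s, (ℓ ∉ F ∨ r ∉ F ∨ s ∉ F) → A ℓ r s = 0)
    (ℓ r s : Z3) (h : ℓ ∉ F ∨ r ∉ F ∨ s ∉ F) : anticommFam A K ℓ r s = 0 := by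
  have h1 : ∀ t, A ℓ r t * K ℓ t s = 0 := fun t => by
    rcases h with h | h | h
    · rw [hAF ℓ r t (by tauto), zero_mul]
    · rw [hAF ℓ r t (by tauto), zero_mul]
    · rw [hKF ℓ t s (by tauto), mul_zero]
  have h2 : ∀ t, K ℓ r t * A ℓ t s = 0 := fun t => by
    rcases h with h | h | h
    · rw [hKF ℓ r t (by tauto), zero_mul]
    · rw [hKF ℓ r t (by tauto), zero_mul]
    · rw [hAF ℓ t s (by tauto), mul_zero]
  simp [anticommFam, matMulR, h1, h2]

/-- Contraction of the common index of `A(ℓ)` and `K(ℓ)`, with `A(ℓ)` symmetric. -/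
lemma sum3_contract {M : Type*} [AddCommGroup M] [Module ℂ M]
    (hAsymm : ∀ ℓ r s : Z3, A ℓ r s = A ℓ s r) (f : Z3 → Z3 → Z3 → M) :
    (sum3 F fun ℓ r s => (A ℓ r s : ℂ) • ∑ t ∈ F, (K ℓ r t : ℂ) • f ℓ s t)
      = sum3 F fun ℓ s t => prodC F A K ℓ s t • f ℓ s t := by
  refine Finset.sum_congr rfl fun ℓ _ => ?_
  rw [Finset.sum_comm]
  refine Finset.sum_congr rfl fun s _ => ?_
  simp only [Finset.smul_sum, prodC, Finset.sum_smul]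
  rw [Finset.sum_comm]
  refine Finset.sum_congr rfl fun t _ => Finset.sum_congr rfl fun r _ => ?_
  rw [smul_smul, hAsymm ℓ r s]

end mat

/-! ### The quadratic operators -/

section quad

variable {H : Type*} [NormedAddCommGroup H] [InnerProductSpace ℂ H] [CompleteSpace H]
  {kF : ℝ} {a : Z3 → H →L[ℂ] H} {K A : Z3 → Z3 → Z3 → ℝ} {F : Finset Z3}

lemma Q1_eq (hA : ∀ ℓ r s : Z3, (r ∉ lens kF ℓ ∨ s ∉ lens kF ℓ) → A ℓ r s = 0)
    (hAF : ∀ ℓ r s, (ℓ ∉ F ∨ r ∉ F ∨ s ∉ F) → A ℓ r s = 0) :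
    Q1 kF a A = (2 : ℂ) • sum3 F fun ℓ r s => (A ℓ r s : ℂ) • (bopS a ℓ r * bop a ℓ s) := by
  unfold Q1
  simp only [coeff_eq hA]
  rw [tsum_eq_sum3]
  intro ℓ r s h
  simp [hAF ℓ r s h]

lemma Q2_eq (hA : ∀ ℓ r s : Z3, (r ∉ lens kF ℓ ∨ s ∉ lens kF ℓ) → A ℓ r s = 0)
    (hAF : ∀ ℓ r s, (ℓ ∉ F ∨ r ∉ F ∨ s ∉ F) → A ℓ r s = 0) :
    Q2 kF a A = sum3 F fun ℓ r s => (A ℓ r s : ℂ) •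
      (bop a ℓ r * bop a (-ℓ) (-s) + bopS a (-ℓ) (-s) * bopS a ℓ r) := by
  unfold Q2
  simp only [coeff_eq hA]
  rw [tsum_eq_sum3]
  intro ℓ r s h
  simp [hAF ℓ r s h]

lemma EQ1_eq (hA : ∀ ℓ r s : Z3, (r ∉ lens kF ℓ ∨ s ∉ lens kF ℓ) → A ℓ r s = 0)
    (hAF : ∀ ℓ r s, (ℓ ∉ F ∨ r ∉ F ∨ s ∉ F) → A ℓ r s = 0) :
    EQ1 kF a K A = (2 : ℂ) • sum3 F fun ℓ r s => (A ℓ r s : ℂ) •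
      (calE kF a K ℓ r * bop a ℓ s + bopS a ℓ s * (calE kF a K ℓ r)†) := by
  unfold EQ1
  simp only [coeff_eq hA]
  rw [tsum_eq_sum3]
  intro ℓ r s h
  simp [hAF ℓ r s h]

lemma EQ2_eq
    (hKsupp : ∀ ℓ r s : Z3, (r ∉ lens kF ℓ ∨ s ∉ lens kF ℓ) → K ℓ r s = 0)
    (hAsupp : ∀ ℓ r s : Z3, (r ∉ lens kF ℓ ∨ s ∉ lens kF ℓ) → A ℓ r s = 0)
    (hKF : ∀ ℓ r s, (ℓ ∉ F ∨ r ∉ F ∨ s ∉ F) → K ℓ r s = 0)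
    (hAF : ∀ ℓ r s, (ℓ ∉ F ∨ r ∉ F ∨ s ∉ F) → A ℓ r s = 0) :
    EQ2 kF a K A = (sum3 F fun ℓ r s => (A ℓ r s : ℂ) •
          (((calE kF a K ℓ r)† * bop a (-ℓ) (-s) + bop a (-ℓ) (-s) * (calE kF a K ℓ r)†)
            + (bopS a (-ℓ) (-s) * calE kF a K ℓ r + calE kF a K ℓ r * bopS a (-ℓ) (-s))))
        + sum3 F fun ℓ r s => (anticommFam A K ℓ r s : ℂ) • epsOp a ℓ ℓ r s := by
  have hN := anticommFam_supp hKsupp hAsupp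
  unfold EQ2
  simp only [smul_add _ (_ • _) (_ • epsOp _ _ _ _ _), smul_smul, ite_mul, one_mul, zero_mul,
    coeff_eq hAsupp, coeff_eq hN]
  rw [tsum_eq_sum3, sum3_add]
  intro ℓ r s h
  simp [hAF ℓ r s h, anticommFam_supp' hKF hAF ℓ r s h]

lemma trace_eq
    (hKsupp : ∀ ℓ r s : Z3, (r ∉ lens kF ℓ ∨ s ∉ lens kF ℓ) → K ℓ r s = 0)
    (hAsupp : ∀ ℓ r s : Z3, (r ∉ lens kF ℓ ∨ s ∉ lens kF ℓ) → A ℓ r s = 0)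
    (hKF : ∀ ℓ r s, (ℓ ∉ F ∨ r ∉ F ∨ s ∉ F) → K ℓ r s = 0)
    (hAF : ∀ ℓ r s, (ℓ ∉ F ∨ r ∉ F ∨ s ∉ F) → A ℓ r s = 0) :
    ((∑' ℓ : Z3, ∑' r : Z3,
        if ℓ ≠ 0 ∧ r ∈ lens kF ℓ then anticommFam A K ℓ r r else 0 : ℝ) : ℂ) •
        (1 : H →L[ℂ] H)
      = sum3 F fun ℓ r s => (anticommFam A K ℓ r s : ℂ) •
          ((if r = s then (1 : ℂ) else 0) • (1 : H →L[ℂ] H)) := by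
  have hN := anticommFam_supp' hKF hAF
  have h0 : ∀ ℓ r, (if ℓ ≠ 0 ∧ r ∈ lens kF ℓ then anticommFam A K ℓ r r else 0)
      = anticommFam A K ℓ r r := fun ℓ r => by
    have := coeff_eq (anticommFam_supp hKsupp hAsupp) ℓ r r
    simp only [and_self_iff] at this
    split_ifs with h
    · rfl
    · rw [if_neg h] at this
      exact_mod_cast this
  have h1 : ∀ ℓ, ∑' r, anticommFam A K ℓ r r = ∑ r ∈ F, anticommFam A K ℓ r r := fun ℓ =>
    tsum_eq_sum fun r hr => hN ℓ r r (by tauto)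
  have h2 : ∑' ℓ, ∑ r ∈ F, anticommFam A K ℓ r r = ∑ ℓ ∈ F, ∑ r ∈ F, anticommFam A K ℓ r r :=
    tsum_eq_sum fun ℓ hl => Finset.sum_eq_zero fun r hr => hN ℓ r r (by tauto)
  simp only [h0, h1, h2]
  push_cast
  simp only [sum3, Finset.sum_smul]
  refine Finset.sum_congr rfl fun ℓ _ => Finset.sum_congr rfl fun r hr => ?_
  rw [Finset.sum_eq_single_of_mem r hr]
  · simp
  · intro s _ hs; simp [hs.symm]

end quad

/-- Commutators of `S` with the quadratic quasi-bosonic operators (Lemma `lem:Q1Kcomm`):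
`[S,Q₁(A)] = Q₂({A,K}) + E_{Q₁}(A)` and
`[S,Q₂(A)] = Q₁({A,K}) + (Σ_ℓ Σ_{r∈L_ℓ} {A(ℓ),K(ℓ)}_{r,r})·Id + E_{Q₂}(A)`. -/
theorem stmt6 {H : Type*} [NormedAddCommGroup H] [InnerProductSpace ℂ H] [CompleteSpace H]
    (kF : ℝ) (hkF : 0 < kF) (a : Z3 → H →L[ℂ] H) (hCAR : CAR a)
    (K : Z3 → Z3 → Z3 → ℝ)
    (hKsymm : ∀ ℓ r s : Z3, K ℓ r s = K ℓ s r)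
    (hKsupp : ∀ ℓ r s : Z3, (r ∉ lens kF ℓ ∨ s ∉ lens kF ℓ) → K ℓ r s = 0)
    (hKrefl : ∀ ℓ r s : Z3, K (-ℓ) (-r) (-s) = K ℓ r s)
    (hKfin : {ℓ : Z3 | K ℓ ≠ 0}.Finite)
    (A : Z3 → Z3 → Z3 → ℝ)
    (hAsymm : ∀ ℓ r s : Z3, A ℓ r s = A ℓ s r)
    (hAsupp : ∀ ℓ r s : Z3, (r ∉ lens kF ℓ ∨ s ∉ lens kF ℓ) → A ℓ r s = 0)
    (hArefl : ∀ ℓ r s : Z3, A (-ℓ) (-r) (-s) = A ℓ r s)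
    (hAfin : {ℓ : Z3 | A ℓ ≠ 0}.Finite) :
    (Sgen kF a K * Q1 kF a A - Q1 kF a A * Sgen kF a K
      = Q2 kF a (anticommFam A K) + EQ1 kF a K A) ∧
    (Sgen kF a K * Q2 kF a A - Q2 kF a A * Sgen kF a K
      = Q1 kF a (anticommFam A K)
        + ((∑' ℓ : Z3, ∑' r : Z3,
            if ℓ ≠ 0 ∧ r ∈ lens kF ℓ then anticommFam A K ℓ r r else 0 : ℝ) : ℂ) •
            (1 : H →L[ℂ] H)
        + EQ2 kF a K A) := by
  obtain ⟨F, hF, hKF, hAF⟩ := exists_box hKsupp hKfin hAsupp hAfin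
  have hN := anticommFam_supp hKsupp hAsupp
  have hN' := anticommFam_supp' hKF hAF
  have hNeq := anticommFam_eq hKsymm hAsymm hKF
  have hM := prodC_refl hKrefl hArefl hF
  have hcS : ∀ {k p : Z3}, p ∈ lens kF k → _ := fun {k p} hp =>
    comm_bopS (k := k) (p := p) hCAR hKsymm hKsupp hKrefl hF hKF hp
  have hcB : ∀ {k p : Z3}, p ∈ lens kF k → _ := fun {k p} hp =>
    comm_bop (k := k) (p := p) hCAR hKsymm hKsupp hKrefl hF hKF hp
  have hAs : ∀ ℓ r s, (A ℓ s r : ℂ) = (A ℓ r s : ℂ) := fun ℓ r s => by rw [hAsymm]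
  constructor
  · rw [Q1_eq hAsupp hAF, Q2_eq hN hN', EQ1_eq hAsupp hAF, mul_smul_comm, smul_mul_assoc,
      ← smul_sub, sum3_mul_comm]
    have hL : (sum3 F fun ℓ r s => Sgen kF a K * (A ℓ r s : ℂ) • (bopS a ℓ r * bop a ℓ s)
          - ((A ℓ r s : ℂ) • (bopS a ℓ r * bop a ℓ s)) * Sgen kF a K)
        = (sum3 F fun ℓ r s => (A ℓ r s : ℂ) • ∑ t ∈ F, (K ℓ r t : ℂ) •
              (bop a (-ℓ) (-t) * bop a ℓ s))
          + (sum3 F fun ℓ r s => (A ℓ r s : ℂ) • (calE kF a K ℓ r * bop a ℓ s))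
          + ((sum3 F fun ℓ s r => (A ℓ r s : ℂ) • ∑ t ∈ F, (K ℓ s t : ℂ) •
              (bopS a ℓ r * bopS a (-ℓ) (-t)))
          + (sum3 F fun ℓ s r => (A ℓ r s : ℂ) • (bopS a ℓ r * (calE kF a K ℓ s)†))) := by
      rw [sum3_swap F (fun ℓ s r => (A ℓ r s : ℂ) • ∑ t ∈ F, (K ℓ s t : ℂ) •
          (bopS a ℓ r * bopS a (-ℓ) (-t))),
        sum3_swap F (fun ℓ s r => (A ℓ r s : ℂ) • (bopS a ℓ r * (calE kF a K ℓ s)†)),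
        ← sum3_add, ← sum3_add, ← sum3_add]
      refine sum3_congr fun ℓ _ r _ s _ => ?_
      by_cases h : r ∉ lens kF ℓ ∨ s ∉ lens kF ℓ
      · simp [hAsupp ℓ r s h]
      rw [not_or, not_not, not_not] at h
      have e1 := hcS h.1
      have e2 := hcB h.2
      rw [mul_smul_comm, smul_mul_assoc, ← smul_sub, ← smul_add, ← smul_add, ← smul_add]
      congr 1
      simp only [← smul_mul_assoc, ← Finset.sum_mul]
      simp only [smul_mul_assoc, ← mul_smul_comm, ← Finset.mul_sum]
      rw [← add_mul, ← mul_add, ← e1, ← e2]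
      noncomm_ring
    have hQ : (sum3 F fun ℓ r s => (anticommFam A K ℓ r s : ℂ) •
          (bop a ℓ r * bop a (-ℓ) (-s) + bopS a (-ℓ) (-s) * bopS a ℓ r))
        = (2 : ℂ) • sum3 F fun ℓ r s => prodC F A K ℓ r s •
          (bop a ℓ r * bop a (-ℓ) (-s) + bopS a (-ℓ) (-s) * bopS a ℓ r) := by
      simp only [hNeq, add_smul, sum3_add]
      rw [two_smul]
      congr 1
      rw [sum3_refl hF]
      refine sum3_congr fun ℓ _ r _ s _ => ?_
      rw [hM, neg_neg, neg_neg, bop_mul_bop_comm hCAR (-ℓ) (-s), bopS_mul_bopS_comm hCAR ℓ r]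
    rw [hL, hQ, sum3_contract hAsymm (fun ℓ s t => bop a (-ℓ) (-t) * bop a ℓ s)]
    simp only [hAs]
    rw [sum3_contract hAsymm (fun ℓ s t => bopS a ℓ s * bopS a (-ℓ) (-t))]
    rw [← smul_add]
    congr 1
    simp only [smul_add, sum3_add]
    simp only [bop_mul_bop_comm hCAR (-_), bopS_mul_bopS_comm hCAR (-_)]
    abel
  · rw [Q2_eq hAsupp hAF, Q1_eq hN hN', EQ2_eq hKsupp hAsupp hKF hAF,
      trace_eq hKsupp hAsupp hKF hAF, sum3_mul_comm]
    -- The Leibniz rule, with the terms hitting the pair `(-ℓ, -s)` reflected to `(ℓ, r)`.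
    have hL : (sum3 F fun ℓ r s => Sgen kF a K * (A ℓ r s : ℂ) •
            (bop a ℓ r * bop a (-ℓ) (-s) + bopS a (-ℓ) (-s) * bopS a ℓ r)
          - ((A ℓ r s : ℂ) •
            (bop a ℓ r * bop a (-ℓ) (-s) + bopS a (-ℓ) (-s) * bopS a ℓ r)) * Sgen kF a K)
        = (sum3 F fun ℓ r s => (A ℓ r s : ℂ) •
            ((Sgen kF a K * bop a ℓ r - bop a ℓ r * Sgen kF a K) * bop a (-ℓ) (-s)
              + bopS a (-ℓ) (-s) * (Sgen kF a K * bopS a ℓ r - bopS a ℓ r * Sgen kF a K)))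
          + sum3 F fun ℓ r s => (A ℓ r s : ℂ) •
            (bop a (-ℓ) (-s) * (Sgen kF a K * bop a ℓ r - bop a ℓ r * Sgen kF a K)
              + (Sgen kF a K * bopS a ℓ r - bopS a ℓ r * Sgen kF a K) * bopS a (-ℓ) (-s)) := by
      rw [sum3_refl hF (fun ℓ r s => (A ℓ r s : ℂ) •
            (bop a (-ℓ) (-s) * (Sgen kF a K * bop a ℓ r - bop a ℓ r * Sgen kF a K)
              + (Sgen kF a K * bopS a ℓ r - bopS a ℓ r * Sgen kF a K) * bopS a (-ℓ) (-s))),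
        ← sum3_add]
      refine sum3_congr fun ℓ _ r _ s _ => ?_
      rw [hArefl, hAs, neg_neg, neg_neg, mul_smul_comm, smul_mul_assoc, ← smul_sub, ← smul_add]
      congr 1
      noncomm_ring
    have hL2 : (sum3 F fun ℓ r s => (A ℓ r s : ℂ) •
            ((Sgen kF a K * bop a ℓ r - bop a ℓ r * Sgen kF a K) * bop a (-ℓ) (-s)
              + bopS a (-ℓ) (-s) * (Sgen kF a K * bopS a ℓ r - bopS a ℓ r * Sgen kF a K)))
          + (sum3 F fun ℓ r s => (A ℓ r s : ℂ) •
            (bop a (-ℓ) (-s) * (Sgen kF a K * bop a ℓ r - bop a ℓ r * Sgen kF a K)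
              + (Sgen kF a K * bopS a ℓ r - bopS a ℓ r * Sgen kF a K) * bopS a (-ℓ) (-s)))
        = (sum3 F fun ℓ r s => (A ℓ r s : ℂ) • ∑ t ∈ F, (K ℓ r t : ℂ) •
            (bopS a (-ℓ) (-t) * bop a (-ℓ) (-s) + bopS a (-ℓ) (-s) * bop a (-ℓ) (-t)
              + bop a (-ℓ) (-s) * bopS a (-ℓ) (-t) + bop a (-ℓ) (-t) * bopS a (-ℓ) (-s)))
          + sum3 F fun ℓ r s => (A ℓ r s : ℂ) •
          (((calE kF a K ℓ r)† * bop a (-ℓ) (-s) + bop a (-ℓ) (-s) * (calE kF a K ℓ r)†)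
            + (bopS a (-ℓ) (-s) * calE kF a K ℓ r
              + calE kF a K ℓ r * bopS a (-ℓ) (-s))) := by
      rw [← sum3_add, ← sum3_add]
      refine sum3_congr fun ℓ _ r _ s _ => ?_
      by_cases h : r ∉ lens kF ℓ ∨ s ∉ lens kF ℓ
      · simp [hAsupp ℓ r s h]
      rw [not_or, not_not, not_not] at h
      rw [hcS h.1, hcB h.1, ← smul_add, ← smul_add]
      congr 1
      simp only [smul_add, Finset.sum_add_distrib, mul_add, add_mul, Finset.sum_mul,
        Finset.mul_sum, smul_mul_assoc, mul_smul_comm]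
      abel
    -- Reflecting and then symmetrizing the matrix turns the main part into
    -- `Σ {A,K}_{r,s} (b_r* b_s + b_r b_s*)`.
    have hMain : (sum3 F fun ℓ s t => prodC F A K ℓ s t •
            (bopS a (-ℓ) (-t) * bop a (-ℓ) (-s) + bopS a (-ℓ) (-s) * bop a (-ℓ) (-t)
              + bop a (-ℓ) (-s) * bopS a (-ℓ) (-t) + bop a (-ℓ) (-t) * bopS a (-ℓ) (-s)))
        = sum3 F fun ℓ r s => (anticommFam A K ℓ r s : ℂ) •
            (bopS a ℓ r * bop a ℓ s + bop a ℓ r * bopS a ℓ s) := by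
      simp only [hNeq, add_smul, sum3_add]
      rw [sum3_swap F (fun ℓ r s => prodC F A K ℓ s r • _), ← sum3_add, sum3_refl hF, sum3_swap]
      refine sum3_congr fun ℓ _ r _ s _ => ?_
      rw [hM]
      simp only [neg_neg]
      module
    -- Normal ordering.
    have hOrd : (sum3 F fun ℓ r s => (anticommFam A K ℓ r s : ℂ) •
            (bopS a ℓ r * bop a ℓ s + bop a ℓ r * bopS a ℓ s))
        = (sum3 F fun ℓ r s => (anticommFam A K ℓ r s : ℂ) • (bopS a ℓ r * bop a ℓ s))
          + ((sum3 F fun ℓ r s => (anticommFam A K ℓ r s : ℂ) • (bopS a ℓ r * bop a ℓ s))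
          + ((sum3 F fun ℓ r s => (anticommFam A K ℓ r s : ℂ) •
              ((if r = s then (1 : ℂ) else 0) • (1 : H →L[ℂ] H)))
          + sum3 F fun ℓ r s => (anticommFam A K ℓ r s : ℂ) • epsOp a ℓ ℓ r s)) := by
      simp only [smul_add, sum3_add]
      congr 1
      rw [sum3_swap F (fun ℓ r s => (anticommFam A K ℓ r s : ℂ) • (bopS a ℓ r * bop a ℓ s)),
        ← sum3_add, ← sum3_add]
      refine sum3_congr fun ℓ _ r _ s _ => ?_
      by_cases h : r ∉ lens kF ℓ ∨ s ∉ lens kF ℓ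
      · simp [hN ℓ r s h, hN ℓ s r h.symm]
      rw [not_or, not_not, not_not] at h
      have hsym : (anticommFam A K ℓ s r : ℂ) = anticommFam A K ℓ r s := by
        rw [hNeq, hNeq, add_comm]
      rw [hsym, bop_mul_bopS hCAR h.1 h.2, smul_add, smul_add, add_assoc]
      simp only [and_true]
    rw [hL, hL2, sum3_contract hAsymm (fun ℓ s t =>
            (bopS a (-ℓ) (-t) * bop a (-ℓ) (-s) + bopS a (-ℓ) (-s) * bop a (-ℓ) (-t)
              + bop a (-ℓ) (-s) * bopS a (-ℓ) (-t) + bop a (-ℓ) (-t) * bopS a (-ℓ) (-s))),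
      hMain, hOrd, two_smul]
    abel
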